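/- arXiv:1907.00061 — 4 statements merged into one kernel-verified Lean document; each statement's English description precedes it below -/
import Mathlib

section
/- For all integers r ≥ 2 and k ≥ 3, there exists a finite simple graph J with two distinguished distinct vertices u and w such that: (1) J has girth at least k; (2) J admits an acyclic r-coloring; and (3) every acyclic r-coloring of J assigns different colors to u and w. -/
/-- `f` is an acyclic coloring of the simple graph `G`: no cycle of `G` is
monochromatic, i.e. each color class induces a forest. -/
def IsAcyclicGraphColoring {V : Type} {r : ℕ} (G : SimpleGraph V) (f : V → Fin r) : Prop :=
  ∀ (v : V) (w : G.Walk v v), w.IsCycle → ∃ x ∈ w.support, f x ≠ f v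

/-!
Erdős' probabilistic argument gives a finite graph of girth larger than `k` which is not
`(2r + 1)`-colorable. Forests are 2-colorable, so even after isolating a vertex `z` the graph has no
acyclic `r`-coloring. Let `G` be an edge-minimal subgraph without acyclic `r`-colorings and let `xy`
be one of its edges. Every acyclic `r`-coloring of `G - xy` then connects `x` and `y` by a
monochromatic path, since otherwise it would still be acyclic on `G`. Now replace the edge `xy` by
the path `x z y`. This does not decrease the girth; an acyclic coloring of `G - xy` extends by
giving `z` any color other than that of `x`, and giving `z` the color of `x` would close the
monochromatic path to a cycle.

For Erdős' theorem choose the edges of a multigraph independently and uniformly from the pairs of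
vertices, with a large constant times as many edges as the number `n` of vertices. With positive
probability every vertex coloring leaves more than `n` edges monochromatic while fewer than `n`
edges start a circuit of length at most `k`. Deleting the latter edges leaves a simple graph in
which every vertex coloring still has a monochromatic edge.
-/

section Monochromatic

open SimpleGraph

variable {V C : Type*} {G : SimpleGraph V} {f : V → C}

/-- The spanning subgraph of the edges of `G` whose two ends get the same color under `f`, so the
disjoint union of the graphs induced on the color classes. It is a forest exactly when every
color class induces a forest, for colors in an arbitrary type. -/
def monochromaticSubgraph (G : SimpleGraph V) (f : V → C) : SimpleGraph V where
  Adj a b := G.Adj a b ∧ f a = f b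
  symm := ⟨fun _ _ h ↦ ⟨h.1.symm, h.2.symm⟩⟩
  loopless := ⟨fun _ h ↦ h.1.ne rfl⟩

lemma monochromaticSubgraph_le : monochromaticSubgraph G f ≤ G :=
  fun _ _ h ↦ h.1

lemma monochromaticSubgraph_mono {H : SimpleGraph V} (h : G ≤ H) :
    monochromaticSubgraph G f ≤ monochromaticSubgraph H f :=
  fun _ _ hab ↦ ⟨h hab.1, hab.2⟩

lemma monochromaticSubgraph_deleteEdges (s : Set (Sym2 V)) :
    monochromaticSubgraph (G.deleteEdges s) f = (monochromaticSubgraph G f).deleteEdges s := by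
  ext a b
  simp only [monochromaticSubgraph, deleteEdges_adj]
  tauto

lemma eq_of_mem_support_monochromaticSubgraph {a b x : V}
    (w : (monochromaticSubgraph G f).Walk a b) (hx : x ∈ w.support) : f x = f a := by
  induction w with
  | nil => rw [Walk.mem_support_nil_iff.1 hx]
  | cons h _ ih =>
    rcases List.mem_cons.1 (Walk.support_cons .. ▸ hx) with rfl | hx
    · rfl
    · rw [ih hx, h.2]

lemma isAcyclicGraphColoring_iff {V : Type} {r : ℕ} {G : SimpleGraph V} {f : V → Fin r} :
    IsAcyclicGraphColoring G f ↔ (monochromaticSubgraph G f).IsAcyclic := by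
  refine ⟨fun h v w hw ↦ ?_, fun h v w hw ↦ ?_⟩
  · obtain ⟨x, hx, hne⟩ := h v (w.mapLe monochromaticSubgraph_le) (hw.mapLe _)
    exact hne (eq_of_mem_support_monochromaticSubgraph w (by simpa using hx))
  · by_contra! hmono
    refine h (w.transfer (monochromaticSubgraph G f) fun e he ↦ ?_) (hw.transfer _)
    induction e with
    | _ a b =>
      exact ⟨w.adj_of_mem_edges he, (hmono a (w.fst_mem_support_of_mem_edges he)).trans
        (hmono b (w.snd_mem_support_of_mem_edges he)).symm⟩

lemma colorable_of_colorable_monochromaticSubgraph {r m : ℕ} {f : V → Fin r}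
    (h : (monochromaticSubgraph G f).Colorable m) : G.Colorable (r * m) := by
  obtain ⟨g⟩ := h
  have hG : G.Coloring (Fin r × Fin m) :=
    Coloring.mk (fun v ↦ (f v, g v)) fun hab heq ↦
      g.valid ⟨hab, congrArg Prod.fst heq⟩ (congrArg Prod.snd heq)
  simpa using hG.colorable

lemma colorable_succ_of_deleteIncidenceSet {m : ℕ} {z : V}
    (h : (G.deleteIncidenceSet z).Colorable m) : G.Colorable (m + 1) := by
  classical
  obtain ⟨g⟩ := h
  have hG : G.Coloring (Option (Fin m)) :=
    Coloring.mk (fun v ↦ if v = z then none else some (g v)) fun {a b} hab heq ↦ by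
      have hab' : a ≠ z → b ≠ z → g a ≠ g b := fun ha hb ↦
        g.valid (deleteIncidenceSet_adj.2 ⟨hab, ha, hb⟩)
      grind [hab.ne]
  simpa using hG.colorable

lemma exists_adj_isAcyclic_deleteEdges [Finite V] [Nonempty C]
    (hG : ∀ f : V → C, ¬ (monochromaticSubgraph G f).IsAcyclic) :
    ∃ H ≤ G, ∃ x y, H.Adj x y ∧ (∀ f : V → C, ¬ (monochromaticSubgraph H f).IsAcyclic) ∧
      ∃ f : V → C, (monochromaticSubgraph (H.deleteEdges {s(x, y)}) f).IsAcyclic := by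
  obtain ⟨H, hHG, hH⟩ := Finite.exists_le_minimal
    (p := fun H : SimpleGraph V ↦ ∀ f : V → C, ¬ (monochromaticSubgraph H f).IsAcyclic) hG
  have hne : H ≠ ⊥ := by
    rintro rfl
    exact hH.prop (fun _ ↦ Classical.arbitrary C) (isAcyclic_bot.anti monochromaticSubgraph_le)
  obtain ⟨x, y, hxy⟩ := ne_bot_iff_exists_adj.1 hne
  refine ⟨H, hHG, x, y, hxy, hH.prop, ?_⟩
  by_contra! hdel
  simpa using hH.le_of_le hdel (deleteEdges_le _) hxy

lemma adj_and_reachable_of_isAcyclic_deleteEdges {x y : V}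
    (hdel : (G.deleteEdges {s(x, y)}).IsAcyclic) (hG : ¬ G.IsAcyclic) :
    G.Adj x y ∧ (G.deleteEdges {s(x, y)}).Reachable x y := by
  have hxy : G.Adj x y := by
    by_contra hxy
    have hself : G.deleteEdges {s(x, y)} = G := deleteEdges_eq_self.2 (by simpa using hxy)
    exact hG (hself ▸ hdel)
  refine ⟨hxy, by_contra fun hreach ↦ hG ?_⟩
  refine (hdel.sup_edge_of_not_reachable hreach).anti fun a b hab ↦ ?_
  by_cases h : s(a, b) = s(x, y)
  · exact .inr ((adj_edge _ _).2 ⟨h.symm, hab.ne⟩)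
  · exact .inl (deleteEdges_adj.2 ⟨hab, h⟩)

lemma eq_and_reachable_of_isAcyclic_monochromaticSubgraph_deleteEdges {x y : V}
    (hdel : (monochromaticSubgraph (G.deleteEdges {s(x, y)}) f).IsAcyclic)
    (hG : ¬ (monochromaticSubgraph G f).IsAcyclic) :
    f x = f y ∧ (monochromaticSubgraph (G.deleteEdges {s(x, y)}) f).Reachable x y := by
  rw [monochromaticSubgraph_deleteEdges] at hdel ⊢
  exact (adj_and_reachable_of_isAcyclic_deleteEdges hdel hG).imp_left And.right

end Monochromatic

section SubdivideEdge

open SimpleGraph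

variable {V C : Type*} {G : SimpleGraph V} {x y z : V}

/-- The subdivision of the edge `s(x, y)` of `G` by a vertex `z`, which is meant to be isolated in
`G`: keeping the vertex type fixed lets walks be transferred between the two graphs. -/
def subdivideEdge (G : SimpleGraph V) (x y z : V) : SimpleGraph V :=
  G.deleteEdges {s(x, y)} ⊔ edge x z ⊔ edge z y

lemma deleteEdges_le_subdivideEdge : G.deleteEdges {s(x, y)} ≤ subdivideEdge G x y z :=
  le_sup_left.trans le_sup_left

lemma deleteEdges_adj_of_subdivideEdge_adj {a b : V} (h : (subdivideEdge G x y z).Adj a b)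
    (ha : a ≠ z) (hb : b ≠ z) : (G.deleteEdges {s(x, y)}).Adj a b := by
  simpa [subdivideEdge, edge_adj, ha, hb] using h

lemma subdivideEdge_adj_right (hxy : G.Adj x y) (hz : G.IsIsolated z) {a : V} :
    (subdivideEdge G x y z).Adj a z ↔ a = x ∨ a = y := by
  have hxz : x ≠ z := by rintro rfl; exact hz _ hxy
  have hyz : y ≠ z := by rintro rfl; exact hz _ hxy.symm
  have haz : ¬ G.Adj a z := fun h ↦ hz _ h.symm
  simp only [subdivideEdge, sup_adj, deleteEdges_adj, edge_adj]
  grind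

lemma exists_isPath_of_isCycle {w : G.Walk z z} (hw : w.IsCycle) :
    ∃ (a b : V) (p : G.Walk a b), p.IsPath ∧ z ∉ p.support ∧ G.Adj a z ∧ G.Adj b z ∧ a ≠ b ∧
      w.length = p.length + 2 := by
  cases w with
  | nil => exact absurd rfl hw.ne_nil
  | @cons _ a _ hza p =>
    obtain ⟨hp, hedge⟩ := (Walk.cons_isCycle_iff p hza).1 hw
    cases hq : p.reverse with
    | nil => exact absurd rfl hza.ne
    | @cons _ b _ hzb q =>
      obtain ⟨hq', hz⟩ := (Walk.cons_isPath_iff hzb q).1 (hq ▸ hp.reverse)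
      refine ⟨b, a, q, hq', hz, hzb.symm, hza.symm, ?_, ?_⟩
      · rintro rfl
        have hmem : s(z, b) ∈ p.reverse.edges := by simp [hq]
        exact hedge (by simpa using hmem)
      · simp [← p.length_reverse, hq]

lemma egirth_le_egirth_subdivideEdge (hxy : G.Adj x y) (hz : G.IsIsolated z) :
    G.egirth ≤ (subdivideEdge G x y z).egirth := by
  classical
  have hdel {a b : V} (p : (subdivideEdge G x y z).Walk a b) (hp : z ∉ p.support) :
      ∀ e ∈ p.edges, e ∈ (G.deleteEdges {s(x, y)}).edgeSet := by
    intro e he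
    induction e with
    | _ c d =>
      exact deleteEdges_adj_of_subdivideEdge_adj (p.adj_of_mem_edges he)
        (ne_of_mem_of_not_mem (p.fst_mem_support_of_mem_edges he) hp)
        (ne_of_mem_of_not_mem (p.snd_mem_support_of_mem_edges he) hp)
  have hle : G.deleteEdges {s(x, y)} ≤ G := deleteEdges_le _
  refine le_egirth.2 fun v w hw ↦ ?_
  by_cases hzw : z ∈ w.support
  · obtain ⟨a, b, p, hp, hzp, ha, hb, hab, hlen⟩ := exists_isPath_of_isCycle (hw.rotate hzw)
    rw [subdivideEdge_adj_right hxy hz] at ha hb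
    have hba : s(b, a) = s(x, y) := by grind
    let q := (p.transfer _ (hdel p hzp)).mapLe hle
    have hq : (Walk.cons (adj_congr_of_sym2 G hba |>.2 hxy) q).IsCycle := by
      refine (Walk.cons_isCycle_iff _ _).2 ⟨(hp.transfer _).mapLe hle, fun h ↦ ?_⟩
      have := hdel p hzp _ (by simpa [q] using h)
      simp [hba] at this
    refine (egirth_le_length hq).trans ?_
    rw [Walk.length_rotate] at hlen
    simp [q, hlen]
  · simpa using egirth_le_length ((hw.transfer (hdel w hzw)).mapLe hle)

lemma monochromaticSubgraph_subdivideEdge_update_le [DecidableEq V] {f : V → C} {c : C}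
    (hxy : G.Adj x y) (hz : G.IsIsolated z) (hx : c ≠ f x) (hy : c ≠ f y) :
    monochromaticSubgraph (subdivideEdge G x y z) (Function.update f z c) ≤
      monochromaticSubgraph (G.deleteEdges {s(x, y)}) f := by
  have hne {a : V} (h : (subdivideEdge G x y z).Adj a z) : Function.update f z c a ≠ c := by
    rw [Function.update_of_ne h.ne]
    rcases (subdivideEdge_adj_right hxy hz).1 h with rfl | rfl
    exacts [hx.symm, hy.symm]
  rintro a b ⟨hab, hfab⟩
  have hb : b ≠ z := by
    rintro rfl
    exact hne hab (by simpa using hfab)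
  have ha : a ≠ z := by
    rintro rfl
    exact hne hab.symm (by simpa using hfab.symm)
  rw [Function.update_of_ne ha, Function.update_of_ne hb] at hfab
  exact ⟨deleteEdges_adj_of_subdivideEdge_adj hab ha hb, hfab⟩

lemma ne_of_isAcyclic_monochromaticSubgraph_subdivideEdge {f : V → C}
    (hxy : G.Adj x y) (hz : G.IsIsolated z) (hfxy : f x = f y)
    (hreach : (monochromaticSubgraph (G.deleteEdges {s(x, y)}) f).Reachable x y)
    (hf : (monochromaticSubgraph (subdivideEdge G x y z) f).IsAcyclic) : f x ≠ f z := by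
  intro hfxz
  have hx := (subdivideEdge_adj_right hxy hz).2 (.inl rfl)
  have hy := (subdivideEdge_adj_right hxy hz).2 (.inr rfl)
  set M := monochromaticSubgraph (subdivideEdge G x y z) f
  have hxz : M.Adj x z := ⟨hx, hfxz⟩
  have hyz : M.Adj y z := ⟨hy, hfxy ▸ hfxz⟩
  refine isBridge_iff.1 (isAcyclic_iff_forall_adj_isBridge.1 hf hxz) (.trans (v := y) ?_ ?_)
  · refine hreach.mono fun a b hab ↦ deleteEdges_adj.2
      ⟨monochromaticSubgraph_mono deleteEdges_le_subdivideEdge hab, fun h ↦ ?_⟩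
    rcases Sym2.eq_iff.1 (Set.mem_singleton_iff.1 h) with ⟨rfl, rfl⟩ | ⟨rfl, rfl⟩
    · exact hz _ (deleteEdges_adj.1 hab.1).1.symm
    · exact hz _ (deleteEdges_adj.1 hab.1).1
  · refine (deleteEdges_adj.2 ⟨hyz, ?_⟩).reachable
    have := hxy.ne
    simp only [Set.mem_singleton_iff, Sym2.eq_iff]
    grind

end SubdivideEdge

section ShortCircuits

open Finset Function SimpleGraph

variable {V I : Type*}

/-- A circuit of length `l + 1` in the multigraph on `V` with edges `f i` for `i : I`: distinct
indices `i 0, …, i l` of edges joining `v j` to `v (j + 1)`, cyclically. Loops are the circuits of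
length one and pairs of parallel edges those of length two. -/
def IsCircuit {l : ℕ} (f : I → V × V) (i : Fin (l + 1) → I) (v : Fin (l + 1) → V) : Prop :=
  Injective i ∧ ∀ j, s((f (i j)).1, (f (i j)).2) = s(v j, v (j + 1))

lemma exists_isCircuit_of_isCycle {G : SimpleGraph V} {f : I → V × V} {S : Set I}
    (hG : ∀ a b, G.Adj a b → ∃ i ∈ S, s((f i).1, (f i).2) = s(a, b)) {a : V} {w : G.Walk a a}
    (hw : w.IsCycle) {l : ℕ} (hl : w.length = l + 1) :
    ∃ (i : Fin (l + 1) → I) (v : Fin (l + 1) → V), IsCircuit f i v ∧ ∀ j, i j ∈ S := by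
  choose i hiS hi using fun j : Fin (l + 1) ↦
    hG _ _ (w.adj_getVert_succ (show (j : ℕ) < w.length by omega))
  refine ⟨i, fun j ↦ w.getVert j, ⟨fun j j' hjj' ↦ Fin.ext ?_, fun j ↦ (hi j).trans ?_⟩, hiS⟩
  · have hedge (j : Fin (l + 1)) : w.edges[(j : ℕ)]'(by simp; omega) =
        s((f (i j)).1, (f (i j)).2) := by
      rw [hi, Walk.getElem_edges]
    exact hw.edges_nodup.getElem_inj_iff.1 (by rw [hedge, hedge, hjj'])
  · rcases eq_or_ne j (Fin.last l) with rfl | hj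
    · simp [← hl]
    · simp only [Fin.val_add_one_of_lt (Fin.lt_last_iff_ne_last.2 hj)]

variable [Fintype I]

open Classical in
/-- The indices of the edges at which a circuit of length at most `k` starts; without these edges
the multigraph `f` has girth greater than `k`. -/
noncomputable def shortCircuitIndices (f : I → V × V) (k : ℕ) : Finset I :=
  {a | ∃ l < k, ∃ (i : Fin (l + 1) → I) (v : Fin (l + 1) → V), IsCircuit f i v ∧ i 0 = a}

lemma mem_shortCircuitIndices {f : I → V × V} {k : ℕ} {a : I} :
    a ∈ shortCircuitIndices f k ↔
      ∃ l < k, ∃ (i : Fin (l + 1) → I) (v : Fin (l + 1) → V), IsCircuit f i v ∧ i 0 = a := by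
  simp [shortCircuitIndices]

/-- The simple graph of those edges of the multigraph `f` at which no circuit of length at most
`k` starts. -/
def deleteShortCircuits (f : I → V × V) (k : ℕ) : SimpleGraph V :=
  fromEdgeSet {e | ∃ i ∉ shortCircuitIndices f k, s((f i).1, (f i).2) = e}

lemma lt_egirth_deleteShortCircuits (f : I → V × V) (k : ℕ) :
    (k : ℕ∞) < (deleteShortCircuits f k).egirth := by
  rw [← ENat.add_one_le_iff (ENat.natCast_ne_top k), le_egirth]
  intro a w hw
  by_contra! hlt
  have hlt : w.length < k + 1 := mod_cast hlt
  obtain ⟨l, hl⟩ := Nat.exists_eq_add_one.2 (hw.three_le_length.trans_lt' three_pos)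
  obtain ⟨i, v, hcirc, hi⟩ := exists_isCircuit_of_isCycle (f := f)
    (S := {i | i ∉ shortCircuitIndices f k}) (fun a b h ↦ ((fromEdgeSet_adj _).1 h).1) hw hl
  exact hi 0 <| mem_shortCircuitIndices.2 ⟨l, by omega, i, v, hcirc, rfl⟩

lemma not_colorable_deleteShortCircuits {f : I → V × V} {k m : ℕ} (hk : 0 < k)
    (hf : ∀ c : V → Fin m, #(shortCircuitIndices f k) < #{i | c (f i).1 = c (f i).2}) :
    ¬ (deleteShortCircuits f k).Colorable m := by
  rintro ⟨c⟩
  obtain ⟨i, hi, hik⟩ := exists_mem_notMem_of_card_lt_card (hf c)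
  refine c.valid ((fromEdgeSet_adj _).2 ⟨⟨i, hik, rfl⟩, fun hloop ↦ hik ?_⟩) (mem_filter.1 hi).2
  refine mem_shortCircuitIndices.2 ⟨0, hk, fun _ ↦ i, fun _ ↦ (f i).1, ⟨?_, fun _ ↦ ?_⟩, rfl⟩
  · exact fun a b _ ↦ Subsingleton.elim (α := Fin 1) a b
  · rw [← hloop]

end ShortCircuits

section RandomMultigraph

open Finset Function
open scoped BigOperators

lemma expect_prod_comp_of_injective {I J α K : Type*} [Fintype I] [Fintype J] [Fintype α]
    [DecidableEq I] [Nonempty α] [Field K] [CharZero K] {i : J → I} (hi : Injective i)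
    (h : J → α → K) :
    𝔼 f : I → α, ∏ j, h j (f (i j)) = ∏ j, 𝔼 a, h j a := by
  have hoff {m : I} (hm : m ∉ Set.range i) : extend i h (1 : I → α → K) m = 1 := by
    simpa using extend_apply' h (1 : I → α → K) m hm
  calc 𝔼 f : I → α, ∏ j, h j (f (i j))
      = 𝔼 f : I → α, ∏ m, extend i h (1 : I → α → K) m (f m) := by
        refine expect_congr rfl fun f _ ↦ Fintype.prod_of_injective i hi _ _
          (fun m hm ↦ ?_) fun j ↦ ?_
        · simp [hoff hm]
        · rw [hi.extend_apply]
    _ = ∏ m, 𝔼 a, extend i h (1 : I → α → K) m a := by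
        simp [Fintype.expect_eq_sum_div_card, ← Fintype.prod_sum, prod_div_distrib]
    _ = ∏ j, 𝔼 a, h j a := by
        refine (Fintype.prod_of_injective i hi _ _ (fun m hm ↦ ?_) fun j ↦ ?_).symm
        · simp [hoff hm]
        · rw [hi.extend_apply]

variable {V C I : Type*} [Fintype V] [Fintype I]

lemma sq_card_le_card_mul_card_filter_eq [Fintype C] [DecidableEq C] (c : V → C) :
    Fintype.card V ^ 2 ≤ Fintype.card C * #{p : V × V | c p.1 = c p.2} := by
  calc Fintype.card V ^ 2
      = (∑ d, #{a | c a = d}) ^ 2 := by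
        rw [← card_univ, card_eq_sum_card_fiberwise fun _ _ ↦ mem_univ (c _)]
    _ ≤ Fintype.card C * ∑ d, #{a | c a = d} ^ 2 := sq_sum_le_card_mul_sum_sq
    _ = Fintype.card C * #{p : V × V | c p.1 = c p.2} := by
        congr 1
        rw [card_eq_sum_card_fiberwise fun p _ ↦ mem_univ (c p.1)]
        refine sum_congr rfl fun d _ ↦ ?_
        rw [sq, ← card_product]
        congr 1
        ext ⟨a, b⟩
        simp only [mem_product, mem_filter]
        grind

lemma expect_ite_eq_half_le [Nonempty V] [Fintype C] [Nonempty C] [DecidableEq C] (c : V → C) :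
    𝔼 p : V × V, (if c p.1 = c p.2 then 1 / 2 else 1 : ℝ) ≤ 1 - 1 / (2 * Fintype.card C) := by
  have hcard : (Fintype.card V : ℝ) ^ 2 ≤ Fintype.card C * #{p : V × V | c p.1 = c p.2} :=
    mod_cast sq_card_le_card_mul_card_filter_eq c
  have hsum : ∑ p : V × V, (if c p.1 = c p.2 then 1 / 2 else 1 : ℝ) =
      Fintype.card V ^ 2 - #{p : V × V | c p.1 = c p.2} / 2 := by
    have hite (p : V × V) : (if c p.1 = c p.2 then 1 / 2 else 1 : ℝ) =
        1 - if c p.1 = c p.2 then 1 / 2 else 0 := by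
      split_ifs <;> norm_num
    simp only [hite, sum_sub_distrib, ← sum_filter, sum_const, card_univ, Fintype.card_prod,
      nsmul_eq_mul, Nat.cast_mul]
    ring
  rw [Fintype.expect_eq_sum_div_card, hsum, Fintype.card_prod, div_le_iff₀ (by positivity)]
  push_cast
  field_simp
  linarith

lemma expect_half_pow_card_le [DecidableEq I] [Nonempty V] [Fintype C] [Nonempty C]
    [DecidableEq C] (c : V → C) :
    𝔼 f : I → V × V, (1 / 2 : ℝ) ^ #{i | c (f i).1 = c (f i).2} ≤
      (1 - 1 / (2 * Fintype.card C)) ^ Fintype.card I := by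
  calc 𝔼 f : I → V × V, (1 / 2 : ℝ) ^ #{i | c (f i).1 = c (f i).2}
      = 𝔼 f : I → V × V, ∏ i, (if c (f i).1 = c (f i).2 then 1 / 2 else 1 : ℝ) := by
        simp [prod_ite]
    _ = (𝔼 p : V × V, (if c p.1 = c p.2 then 1 / 2 else 1 : ℝ)) ^ Fintype.card I := by
        simpa using expect_prod_comp_of_injective injective_id
          (fun _ p ↦ if c p.1 = c p.2 then 1 / 2 else 1 : I → V × V → ℝ)
    _ ≤ (1 - 1 / (2 * Fintype.card C)) ^ Fintype.card I := by
        refine pow_le_pow_left₀ (expect_nonneg fun p _ ↦ ?_) (expect_ite_eq_half_le c) _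
        positivity

lemma expect_mk_eq_le [DecidableEq V] (e : Sym2 V) :
    𝔼 p : V × V, (if s(p.1, p.2) = e then 1 else 0 : ℝ) ≤ 2 / Fintype.card V ^ 2 := by
  induction e with
  | _ a b =>
    have hsub : ({p | s(p.1, p.2) = s(a, b)} : Finset (V × V)) ⊆ {(a, b), (b, a)} := by
      intro p hp
      simpa [Prod.ext_iff] using hp
    rw [Fintype.expect_eq_sum_div_card, sum_boole, Fintype.card_prod, Nat.cast_mul, ← sq]
    gcongr
    exact_mod_cast (card_le_card hsub).trans card_le_two

open Classical in
lemma expect_isCircuit_le [DecidableEq I] [Nonempty V] {l : ℕ} (i : Fin (l + 1) → I)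
    (v : Fin (l + 1) → V) :
    𝔼 f : I → V × V, (if IsCircuit f i v then 1 else 0 : ℝ) ≤
      (2 / Fintype.card V ^ 2) ^ (l + 1) := by
  by_cases hi : Injective i
  · let h (j : Fin (l + 1)) (p : V × V) : ℝ := if s(p.1, p.2) = s(v j, v (j + 1)) then 1 else 0
    calc 𝔼 f : I → V × V, (if IsCircuit f i v then 1 else 0 : ℝ)
        = 𝔼 f : I → V × V, ∏ j, h j (f (i j)) := by
          refine expect_congr rfl fun f _ ↦ ?_
          simp [IsCircuit, hi, h, Fintype.prod_boole]
      _ = ∏ j, 𝔼 p, h j p := expect_prod_comp_of_injective hi h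
      _ ≤ ∏ _j : Fin (l + 1), 2 / (Fintype.card V : ℝ) ^ 2 :=
          prod_le_prod (fun j _ ↦ expect_nonneg fun p _ ↦ by positivity)
            fun j _ ↦ expect_mk_eq_le _
      _ = (2 / Fintype.card V ^ 2) ^ (l + 1) := by
          rw [prod_const, card_univ, Fintype.card_fin]
  · simp only [IsCircuit, hi, false_and, if_false, expect_const_zero]
    positivity

open Classical in
lemma card_shortCircuitIndices_le (f : I → V × V) (k : ℕ) :
    #(shortCircuitIndices f k) ≤ ∑ l ∈ range k,
      #{p : (Fin (l + 1) → I) × (Fin (l + 1) → V) | IsCircuit f p.1 p.2} := by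
  have hsub : shortCircuitIndices f k ⊆ (range k).biUnion fun l ↦
      ({p : (Fin (l + 1) → I) × (Fin (l + 1) → V) | IsCircuit f p.1 p.2} : Finset _).image
        fun p ↦ p.1 0 := by
    intro a
    simp [mem_shortCircuitIndices]
  exact (card_le_card hsub).trans <| card_biUnion_le.trans <| sum_le_sum fun l _ ↦ card_image_le

lemma expect_card_shortCircuitIndices_le [DecidableEq I] [Nonempty V] (k : ℕ) :
    𝔼 f : I → V × V, (#(shortCircuitIndices f k) : ℝ) ≤
      ∑ l ∈ range k, (2 * Fintype.card I / Fintype.card V : ℝ) ^ (l + 1) := by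
  classical
  calc 𝔼 f : I → V × V, (#(shortCircuitIndices f k) : ℝ)
      ≤ 𝔼 f : I → V × V, ∑ l ∈ range k, ∑ p : (Fin (l + 1) → I) × (Fin (l + 1) → V),
          (if IsCircuit f p.1 p.2 then 1 else 0 : ℝ) := by
        refine expect_le_expect fun f _ ↦ ?_
        simp only [sum_boole]
        exact_mod_cast card_shortCircuitIndices_le f k
    _ = ∑ l ∈ range k, ∑ p : (Fin (l + 1) → I) × (Fin (l + 1) → V),
          𝔼 f : I → V × V, (if IsCircuit f p.1 p.2 then 1 else 0 : ℝ) := by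
        simp only [expect_sum_comm]
    _ ≤ ∑ l ∈ range k, ∑ _p : (Fin (l + 1) → I) × (Fin (l + 1) → V),
          (2 / Fintype.card V ^ 2 : ℝ) ^ (l + 1) :=
        sum_le_sum fun l _ ↦ sum_le_sum fun p _ ↦ expect_isCircuit_le p.1 p.2
    _ = ∑ l ∈ range k, (2 * Fintype.card I / Fintype.card V : ℝ) ^ (l + 1) := by
        refine sum_congr rfl fun l _ ↦ ?_
        simp only [sum_const, card_univ, Fintype.card_prod, Fintype.card_fun, Fintype.card_fin,
          nsmul_eq_mul, Nat.cast_mul, Nat.cast_pow, ← mul_pow]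
        congr 1
        field_simp

lemma exists_card_shortCircuitIndices_lt [Nonempty V] [Fintype C] [Nonempty C] [DecidableEq C]
    {k : ℕ}
    (h : (2 * Fintype.card C : ℝ) ^ Fintype.card V *
        (1 - 1 / (2 * Fintype.card C)) ^ Fintype.card I +
      (∑ l ∈ range k, (2 * Fintype.card I / Fintype.card V : ℝ) ^ (l + 1)) / Fintype.card V < 1) :
    ∃ f : I → V × V, ∀ c : V → C,
      #(shortCircuitIndices f k) < #{i | c (f i).1 = c (f i).2} := by
  classical
  set n := Fintype.card V
  have hn : (0 : ℝ) < n := by positivity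
  -- `Φ f < 1` bounds each summand by one: `2 ^ n < 2 ^ #{…}` for every `c`, and `#(…) < n`.
  let Φ (f : I → V × V) : ℝ :=
    ∑ c : V → C, 2 ^ n * (1 / 2) ^ #{i | c (f i).1 = c (f i).2} + #(shortCircuitIndices f k) / n
  have hΦ : 𝔼 f, Φ f < 1 := by
    refine lt_of_le_of_lt ?_ h
    simp only [Φ, expect_add_distrib, expect_sum_comm, ← mul_expect, ← expect_div]
    gcongr
    · calc ∑ c : V → C, 2 ^ n * 𝔼 f : I → V × V, (1 / 2 : ℝ) ^ #{i | c (f i).1 = c (f i).2}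
          ≤ ∑ _c : V → C, 2 ^ n * (1 - 1 / (2 * Fintype.card C) : ℝ) ^ Fintype.card I := by
            gcongr with c
            exact expect_half_pow_card_le c
        _ = (2 * Fintype.card C) ^ n * (1 - 1 / (2 * Fintype.card C)) ^ Fintype.card I := by
            simp only [sum_const, card_univ, Fintype.card_fun, nsmul_eq_mul, Nat.cast_pow]
            ring
    · exact expect_card_shortCircuitIndices_le k
  obtain ⟨f, -, hf⟩ := exists_lt_of_expect_lt univ_nonempty hΦ
  refine ⟨f, fun c ↦ ?_⟩
  have hcirc : #(shortCircuitIndices f k) < n := by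
    have := (le_add_of_nonneg_left (by positivity)).trans_lt hf
    exact_mod_cast (div_lt_one hn).1 this
  have hmono : n < #{i | c (f i).1 = c (f i).2} := by
    have hc : (2 : ℝ) ^ n * (1 / 2) ^ #{i | c (f i).1 = c (f i).2} < 1 := by
      refine lt_of_le_of_lt ?_ ((le_add_of_nonneg_right (by positivity)).trans_lt hf)
      exact single_le_sum (f := fun c : V → C ↦ 2 ^ n * (1 / 2 : ℝ) ^ #{i | c (f i).1 = c (f i).2})
        (fun _ _ ↦ by positivity) (mem_univ c)
    rw [one_div, inv_pow, ← div_eq_mul_inv, div_lt_one (by positivity)] at hc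
    exact (pow_lt_pow_iff_right₀ one_lt_two).1 hc
  exact hcirc.trans hmono

lemma exists_two_mul_pow_mul_pow_le_half {x : ℝ} (hx : 1 ≤ x) :
    ∃ C : ℕ, ∀ n ≠ 0, (2 * x) ^ n * (1 - 1 / (2 * x)) ^ (C * n) ≤ 1 / 2 := by
  have hq0 : 0 ≤ 1 - 1 / (2 * x) := sub_nonneg.2 <| (div_le_one (by positivity)).2 (by linarith)
  have hq1 : 1 - 1 / (2 * x) < 1 := sub_lt_self 1 (by positivity)
  obtain ⟨C, hC⟩ := exists_pow_lt_of_lt_one (show 0 < 1 / (4 * x) by positivity) hq1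
  have hbase : 2 * x * (1 - 1 / (2 * x)) ^ C ≤ 1 / 2 := by
    calc 2 * x * (1 - 1 / (2 * x)) ^ C ≤ 2 * x * (1 / (4 * x)) := by gcongr
      _ = 1 / 2 := by field_simp; norm_num
  refine ⟨C, fun n hn ↦ ?_⟩
  calc (2 * x) ^ n * (1 - 1 / (2 * x)) ^ (C * n)
      = (2 * x * (1 - 1 / (2 * x)) ^ C) ^ n := by rw [pow_mul, ← mul_pow]
    _ ≤ 2 * x * (1 - 1 / (2 * x)) ^ C :=
        pow_le_of_le_one (by positivity) (hbase.trans one_half_lt_one.le) hn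
    _ ≤ 1 / 2 := hbase

theorem exists_lt_egirth_not_colorable (k m : ℕ) :
    ∃ (V : Type) (_ : Fintype V) (G : SimpleGraph V), (k : ℕ∞) < G.egirth ∧ ¬ G.Colorable m := by
  obtain ⟨C, hC⟩ := exists_two_mul_pow_mul_pow_le_half (x := m + 1) (by simp)
  let K := ∑ l ∈ range (k + 1), (2 * C) ^ (l + 1)
  let n := 2 * K + 1
  have hn : (n : ℝ) ≠ 0 := by positivity
  have hcirc : (∑ l ∈ range (k + 1), (2 * (C * n) / n : ℝ) ^ (l + 1)) / n < 1 / 2 := by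
    have hsum : ∑ l ∈ range (k + 1), (2 * (C * n) / n : ℝ) ^ (l + 1) = K := by
      simp [K, ← mul_assoc, hn]
    rw [hsum, div_lt_div_iff₀ (by positivity) two_pos]
    simp only [n]
    push_cast
    linarith
  obtain ⟨f, hf⟩ := exists_card_shortCircuitIndices_lt (V := Fin n) (I := Fin (C * n))
    (C := Fin (m + 1)) (k := k + 1) <| by
      simpa using add_lt_add_of_le_of_lt (hC n (by positivity)) hcirc |>.trans_eq (add_halves 1)
  refine ⟨Fin n, inferInstance, deleteShortCircuits f (k + 1), ?_, fun h ↦ ?_⟩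
  · exact lt_of_le_of_lt (by simp) (lt_egirth_deleteShortCircuits f (k + 1))
  · exact not_colorable_deleteShortCircuits k.succ_pos hf (h.mono m.le_succ)

end RandomMultigraph

section Gadget

open SimpleGraph

lemma exists_isIsolated_forall_not_isAcyclic_monochromaticSubgraph (r k : ℕ) :
    ∃ (V : Type) (_ : Fintype V) (G : SimpleGraph V) (z : V), (k : ℕ∞) < G.egirth ∧
      G.IsIsolated z ∧ ∀ f : V → Fin r, ¬ (monochromaticSubgraph G f).IsAcyclic := by
  obtain ⟨V, hV, G, hgirth, hG⟩ := exists_lt_egirth_not_colorable k (r * 2 + 1)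
  obtain ⟨z⟩ : Nonempty V := by
    by_contra! hempty
    exact hG (.of_isEmpty _)
  refine ⟨V, hV, G.deleteIncidenceSet z, z, ?_, fun a h ↦ ?_, fun f hf ↦ ?_⟩
  · exact hgirth.trans_le (egirth_anti (deleteIncidenceSet_le _ _))
  · exact (deleteIncidenceSet_adj.1 h).2.1 rfl
  · exact hG <| colorable_succ_of_deleteIncidenceSet <|
      colorable_of_colorable_monochromaticSubgraph hf.colorable_two

end Gadget

/-- For all `r ≥ 2`, `k ≥ 3` there is a finite simple graph `J` with girth at
least `k`, admitting an acyclic `r`-coloring, with two distinct vertices `u`,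
`w` that get different colors in every acyclic `r`-coloring. -/
theorem exists_diff_color_gadget (r k : ℕ) (hr : 2 ≤ r) (hk : 3 ≤ k) :
    ∃ (V : Type) (_ : Fintype V) (G : SimpleGraph V) (u w : V),
      u ≠ w ∧
      (k : ℕ∞) ≤ G.egirth ∧
      (∃ f : V → Fin r, IsAcyclicGraphColoring G f) ∧
      (∀ f : V → Fin r, IsAcyclicGraphColoring G f → f u ≠ f w) := by
  classical
  simp only [isAcyclicGraphColoring_iff]
  obtain ⟨V, hV, G₀, z, hgirth, hz, hG₀⟩ :=
    exists_isIsolated_forall_not_isAcyclic_monochromaticSubgraph r k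
  have : Nontrivial (Fin r) := Fin.nontrivial_iff_two_le.2 hr
  obtain ⟨G, hle, x, y, hxy, hG, g, hg⟩ := exists_adj_isAcyclic_deleteEdges hG₀
  replace hz : G.IsIsolated z := fun a h ↦ hz a (hle h)
  refine ⟨V, hV, subdivideEdge G x y z, x, z, ?_, ?_, ?_, fun f hf ↦ ?_⟩
  · rintro rfl
    exact hz y hxy
  · exact hgirth.le.trans <| (SimpleGraph.egirth_anti hle).trans <|
      egirth_le_egirth_subdivideEdge hxy hz
  · obtain ⟨hgxy, -⟩ := eq_and_reachable_of_isAcyclic_monochromaticSubgraph_deleteEdges hg (hG g)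
    obtain ⟨c, hc⟩ := exists_ne (g x)
    exact ⟨Function.update g z c, hg.anti <|
      monochromaticSubgraph_subdivideEdge_update_le hxy hz hc (hgxy ▸ hc)⟩
  · obtain ⟨hfxy, hreach⟩ := eq_and_reachable_of_isAcyclic_monochromaticSubgraph_deleteEdges
      (hf.anti (monochromaticSubgraph_mono deleteEdges_le_subdivideEdge)) (hG f)
    exact ne_of_isAcyclic_monochromaticSubgraph_subdivideEdge hxy hz hfxy hreach hf
end

section
/- For all integers r ≥ 2 and k ≥ 3, there exists a finite digraph J with two distinguished distinct vertices u and v such that: (1) J has directed girth at least k (every directed cycle of J has length at least k); (2) J admits an acyclic r-coloring; (3) every acyclic r-coloring of J assigns the same color to u and v; and (4) every directed path in J from u to v has at least k vertices. -/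
/-- A directed cycle of length `ℓ ≥ 2` in the digraph with arc relation `Adj`. -/
def IsDicycle {V : Type} (Adj : V → V → Prop) (ℓ : ℕ) (c : ZMod ℓ → V) : Prop :=
  2 ≤ ℓ ∧ Function.Injective c ∧ ∀ j : ZMod ℓ, Adj (c j) (c (j + 1))

/-- `f` is an acyclic coloring of the digraph with arc relation `Adj`: no
directed cycle is monochromatic. -/
def IsAcyclicDigraphColoring {V : Type} {r : ℕ} (Adj : V → V → Prop) (f : V → Fin r) : Prop :=
  ∀ (ℓ : ℕ) (c : ZMod ℓ → V), IsDicycle Adj ℓ c → ∃ i j : ZMod ℓ, f (c i) ≠ f (c j)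

/-- A directed path on `ℓ + 1` distinct vertices in the digraph `Adj`. -/
def IsDipath {V : Type} (Adj : V → V → Prop) (ℓ : ℕ) (c : Fin (ℓ + 1) → V) : Prop :=
  Function.Injective c ∧ ∀ i : Fin ℓ, Adj (c i.castSucc) (c i.succ)

/-!
Substituting a digraph without acyclic `r`-colorings for every vertex of a directed `k`-cycle gives
one without acyclic `(r + 1)`-colorings: each copy must use color `0`, and picking one such vertex
per copy yields a monochromatic `k`-cycle. Substitution creates no directed cycle shorter than `k`,
since a cycle meeting several copies winds around the `k`-cycle. So there are digraphs of directed
girth at least `k` without acyclic `r`-colorings.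

Take such a digraph with a minimal arc relation and delete an arc `x → y`. By minimality the rest is
`r`-colorable, and a coloring with distinct colors at `x` and `y` would be acyclic even with the arc
put back. A path from `y` to `x` becomes a cycle with that arc, so it has at least `k` vertices.
-/

section Basic

variable {V : Type} {A B : V → V → Prop} {k ℓ r : ℕ}

/-- The digraph `A` has directed girth at least `k`. Loops are not cycles in the sense of
`IsDicycle`, so their absence is a separate condition. -/
def HasDigirthAtLeast (A : V → V → Prop) (k : ℕ) : Prop :=
  ∀ (ℓ : ℕ) (c : ZMod ℓ → V), IsDicycle A ℓ c → k ≤ ℓ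

/-- The digraph `A` admits an acyclic coloring with `r` colors, i.e. its dichromatic number is at
most `r`. -/
def IsAcyclicColorable (r : ℕ) (A : V → V → Prop) : Prop :=
  ∃ f : V → Fin r, IsAcyclicDigraphColoring A f

lemma IsDicycle.mono {c : ZMod ℓ → V} (hBA : B ≤ A) (hc : IsDicycle B ℓ c) : IsDicycle A ℓ c :=
  ⟨hc.1, hc.2.1, fun j => hBA _ _ (hc.2.2 j)⟩

lemma HasDigirthAtLeast.anti (hBA : B ≤ A) (hA : HasDigirthAtLeast A k) :
    HasDigirthAtLeast B k :=
  fun ℓ c hc => hA ℓ c (hc.mono hBA)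

lemma IsDipath.isDicycle {c : Fin (ℓ + 1) → V} (hc : IsDipath A ℓ c) (hℓ : 1 ≤ ℓ)
    (hclose : A (c (Fin.last ℓ)) (c 0)) : IsDicycle A (ℓ + 1) c := by
  have hadj (j : Fin (ℓ + 1)) : A (c j) (c (j + 1)) := by
    induction j using Fin.lastCases with
    | last => rwa [Fin.last_add_one]
    | cast i => rw [Fin.coeSucc_eq_succ]; exact hc.2 i
  exact ⟨Nat.succ_le_succ hℓ, hc.1, hadj⟩

lemma IsAcyclicDigraphColoring.of_comp {s : ℕ} {g : Fin r → Fin s} {f : V → Fin r}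
    (hf : IsAcyclicDigraphColoring A (g ∘ f)) : IsAcyclicDigraphColoring A f := fun ℓ c hc =>
  let ⟨i, j, hij⟩ := hf ℓ c hc
  ⟨i, j, ne_of_apply_ne g hij⟩

lemma exists_adj_of_not_isAcyclicColorable [NeZero r] (hA : ¬ IsAcyclicColorable r A) :
    ∃ x y, A x y := by
  by_contra! hempty
  exact hA ⟨0, fun _ _ hc => (hempty _ _ (hc.2.2 0)).elim⟩

end Basic

section Substitution

variable {V W : Type} {A : V → V → Prop} {R : W → W → Prop} {k ℓ n r : ℕ}

/-- The directed cycle on `ZMod n`. The substitution of a digraph `A` for each of its vertices is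
the lexicographic product `Prod.Lex (directedCycleAdj n) A`. -/
def directedCycleAdj (n : ℕ) (i j : ZMod n) : Prop :=
  j = i + 1

lemma isDicycle_directedCycleAdj (hn : 2 ≤ n) : IsDicycle (directedCycleAdj n) n id :=
  ⟨hn, Function.injective_id, fun _ => rfl⟩

lemma not_directedCycleAdj_self (hn : 2 ≤ n) (i : ZMod n) : ¬ directedCycleAdj n i i := by
  have : Fact (1 < n) := ⟨hn⟩
  simp [directedCycleAdj]

lemma IsDicycle.lex_fiber {c : ZMod ℓ → V} (hc : IsDicycle A ℓ c) (w : W) :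
    IsDicycle (Prod.Lex R A) ℓ fun j => (w, c j) :=
  ⟨hc.1, (Prod.mk_right_injective w).comp hc.2.1, fun j => .right _ (hc.2.2 j)⟩

lemma IsDicycle.lex_transversal {c : ZMod ℓ → W} (hc : IsDicycle R ℓ c) (a : W → V) :
    IsDicycle (Prod.Lex R A) ℓ fun j => (c j, a (c j)) :=
  ⟨hc.1, fun _ _ hij => hc.2.1 (congrArg Prod.fst hij), fun j => .left _ _ (hc.2.2 j)⟩

lemma IsAcyclicDigraphColoring.exists_eq_zero_of_lex {f : W × V → Fin (r + 1)}
    (hf : IsAcyclicDigraphColoring (Prod.Lex R A) f) (hA : ¬ IsAcyclicColorable r A) (w : W) :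
    ∃ a, f (w, a) = 0 := by
  by_contra! hne
  have hfiber : IsAcyclicDigraphColoring A fun a => f (w, a) :=
    fun ℓ c hc => hf ℓ _ (hc.lex_fiber w)
  have hpred : Fin.succ ∘ (fun a => (f (w, a)).pred (hne a)) = fun a => f (w, a) :=
    funext fun a => Fin.succ_pred _ (hne a)
  exact hA ⟨_, .of_comp (g := Fin.succ) (hpred ▸ hfiber)⟩

lemma not_isAcyclicColorable_lex {c : ZMod ℓ → W} (hc : IsDicycle R ℓ c)
    (hA : ¬ IsAcyclicColorable r A) : ¬ IsAcyclicColorable (r + 1) (Prod.Lex R A) := by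
  rintro ⟨f, hf⟩
  choose a ha using hf.exists_eq_zero_of_lex hA
  obtain ⟨i, j, hij⟩ := hf ℓ _ (hc.lex_transversal a)
  exact hij ((ha _).trans (ha _).symm)

lemma sum_add_one_sub_eq_zero {G : Type*} [AddCommGroup G] [NeZero ℓ] (x : ZMod ℓ → G) :
    ∑ j, (x (j + 1) - x j) = 0 := by
  rw [Finset.sum_sub_distrib, sub_eq_zero]
  exact Equiv.sum_comp (Equiv.addRight 1) x

lemma eq_of_periodic_one {α : Type*} {x : ZMod ℓ → α} (hx : Function.Periodic x 1)
    (i j : ZMod ℓ) : x i = x j := by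
  have hzero (i : ZMod ℓ) : x i = x 0 := by
    obtain ⟨m, rfl⟩ := ZMod.intCast_surjective i
    simpa only [mul_one] using hx.int_mul_eq m
  rw [hzero i, hzero j]

-- The number of advancing steps of a closed walk around the `n`-cycle is divisible by `n`.
lemma periodic_one_or_le_of_closedWalk [NeZero ℓ] {x : ZMod ℓ → ZMod n}
    (hx : ∀ j, x (j + 1) = x j ∨ x (j + 1) = x j + 1) : Function.Periodic x 1 ∨ n ≤ ℓ := by
  classical
  let advancing : Finset (ZMod ℓ) := {j | x (j + 1) ≠ x j}
  have hstep (j : ZMod ℓ) : (if x (j + 1) ≠ x j then 1 else 0) = x (j + 1) - x j := by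
    split_ifs with h
    · rw [(hx j).resolve_left h, add_sub_cancel_left]
    · rw [not_not.mp h, sub_self]
  have hdvd : n ∣ advancing.card := by
    rw [← ZMod.natCast_eq_zero_iff, ← sum_add_one_sub_eq_zero x, ← Finset.sum_boole]
    exact Finset.sum_congr rfl fun j _ => hstep j
  rcases advancing.eq_empty_or_nonempty with hempty | hne
  · exact .inl (by simpa [advancing, Finset.filter_eq_empty_iff] using hempty)
  · right
    calc n ≤ advancing.card := Nat.le_of_dvd hne.card_pos hdvd
      _ ≤ Fintype.card (ZMod ℓ) := Finset.card_le_univ _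
      _ = ℓ := ZMod.card ℓ

lemma IsDicycle.of_lex {c : ZMod ℓ → W × V} (hc : IsDicycle (Prod.Lex R A) ℓ c)
    (hR : ∀ w, ¬ R w w) (hconst : ∀ i j, (c i).1 = (c j).1) :
    IsDicycle A ℓ fun j => (c j).2 := by
  refine ⟨hc.1, fun i j hij => hc.2.1 (Prod.ext (hconst i j) hij), fun j => ?_⟩
  have hR' : ¬ R (c j).1 (c (j + 1)).1 := hconst j (j + 1) ▸ hR _
  exact ((Prod.lex_iff.mp (hc.2.2 j)).resolve_left hR').2

lemma HasDigirthAtLeast.lex_directedCycleAdj (hn : 2 ≤ n) (hA : HasDigirthAtLeast A n) :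
    HasDigirthAtLeast (Prod.Lex (directedCycleAdj n) A) n := by
  intro ℓ c hc
  have : NeZero ℓ := ⟨Nat.ne_zero_of_lt hc.1⟩
  have hstep (j : ZMod ℓ) : (c (j + 1)).1 = (c j).1 ∨ (c (j + 1)).1 = (c j).1 + 1 :=
    (Prod.lex_iff.mp (hc.2.2 j)).symm.imp_left fun h => h.1.symm
  rcases periodic_one_or_le_of_closedWalk (x := fun j => (c j).1) hstep with hper | hle
  · exact hA ℓ _ (hc.of_lex (not_directedCycleAdj_self hn) (eq_of_periodic_one hper))
  · exact hle

theorem exists_hasDigirthAtLeast_not_isAcyclicColorable (hk : 2 ≤ k) (r : ℕ) :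
    ∃ (V : Type) (_ : Fintype V) (A : V → V → Prop),
      (∀ w, ¬ A w w) ∧ HasDigirthAtLeast A k ∧ ¬ IsAcyclicColorable r A := by
  induction r with
  | zero =>
    exact ⟨Unit, inferInstance, fun _ _ => False, fun _ => id, fun _ _ hc => (hc.2.2 0).elim,
      fun ⟨f, _⟩ => (f ()).elim0⟩
  | succ r ih =>
    obtain ⟨V, _, A, hloopless, hgirth, hA⟩ := ih
    have : NeZero k := ⟨Nat.ne_zero_of_lt hk⟩
    refine ⟨ZMod k × V, inferInstance, Prod.Lex (directedCycleAdj k) A, fun w hw => ?_,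
      hgirth.lex_directedCycleAdj hk,
      not_isAcyclicColorable_lex (isDicycle_directedCycleAdj hk) hA⟩
    exact (Prod.lex_iff.mp hw).elim (not_directedCycleAdj_self hk _) fun h => hloopless _ h.2

end Substitution

section ArcDeletion

variable {V : Type} {A : V → V → Prop} {x y : V} {k ℓ r : ℕ}

/-- The digraph `A` with the arc from `x` to `y` removed. -/
def deleteArc (A : V → V → Prop) (x y a b : V) : Prop :=
  A a b ∧ ¬ (a = x ∧ b = y)

lemma deleteArc_le (A : V → V → Prop) (x y : V) : deleteArc A x y ≤ A :=
  fun _ _ h => h.1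

lemma deleteArc_lt (hxy : A x y) : deleteArc A x y < A :=
  lt_of_le_not_ge (deleteArc_le A x y) fun h => (h x y hxy).2 ⟨rfl, rfl⟩

lemma IsAcyclicDigraphColoring.of_deleteArc {f : V → Fin r}
    (hf : IsAcyclicDigraphColoring (deleteArc A x y) f) (hxy : f x ≠ f y) :
    IsAcyclicDigraphColoring A f := by
  intro ℓ c hc
  by_cases huses : ∃ j, c j = x ∧ c (j + 1) = y
  · obtain ⟨j, rfl, rfl⟩ := huses
    exact ⟨j, j + 1, hxy⟩
  · exact hf ℓ c ⟨hc.1, hc.2.1, fun j => ⟨hc.2.2 j, fun hj => huses ⟨j, hj⟩⟩⟩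

lemma HasDigirthAtLeast.le_of_isDipath_deleteArc (hA : HasDigirthAtLeast A k) (hxy : A x y)
    (hne : y ≠ x) {c : Fin (ℓ + 1) → V} (hc : IsDipath (deleteArc A x y) ℓ c) (hstart : c 0 = y)
    (hend : c (Fin.last ℓ) = x) : k ≤ ℓ + 1 := by
  have hℓ : ℓ ≠ 0 := by
    rintro rfl
    exact hne (hstart.symm.trans hend)
  have hcA : IsDipath A ℓ c := ⟨hc.1, fun i => (hc.2 i).1⟩
  refine hA _ c (hcA.isDicycle (Nat.one_le_iff_ne_zero.mpr hℓ) ?_)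
  rwa [hstart, hend]

end ArcDeletion

/-- For all `r ≥ 2`, `k ≥ 3` there is a finite digraph `J` with directed girth
at least `k`, admitting an acyclic `r`-coloring, with two distinct vertices
`u`, `v` that get the same color in every acyclic `r`-coloring, and such that
every directed path from `u` to `v` has at least `k` vertices. -/
theorem exists_same_color_digraph_gadget (r k : ℕ) (hr : 2 ≤ r) (hk : 3 ≤ k) :
    ∃ (V : Type) (_ : Fintype V) (Adj : V → V → Prop) (u v : V),
      u ≠ v ∧
      (∀ w : V, ¬ Adj w w) ∧
      (∀ (ℓ : ℕ) (c : ZMod ℓ → V), IsDicycle Adj ℓ c → k ≤ ℓ) ∧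
      (∃ f : V → Fin r, IsAcyclicDigraphColoring Adj f) ∧
      (∀ f : V → Fin r, IsAcyclicDigraphColoring Adj f → f u = f v) ∧
      (∀ (ℓ : ℕ) (c : Fin (ℓ + 1) → V),
        IsDipath Adj ℓ c → c 0 = u → c (Fin.last ℓ) = v → k ≤ ℓ + 1) := by
  have : NeZero r := ⟨Nat.ne_zero_of_lt hr⟩
  obtain ⟨V, _, D, hloopless, hgirth, hD⟩ :=
    exists_hasDigirthAtLeast_not_isAcyclicColorable (Nat.le_of_succ_le hk) r
  obtain ⟨A, hAD, hA⟩ :=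
    exists_minimal_le_of_wellFoundedLT (fun B => ¬ IsAcyclicColorable r B) D hD
  obtain ⟨x, y, hxy⟩ := exists_adj_of_not_isAcyclicColorable hA.prop
  have hAgirth : HasDigirthAtLeast A k := hgirth.anti hAD
  have hAloopless (w : V) : ¬ A w w := fun hw => hloopless w (hAD w w hw)
  have hne : y ≠ x := by
    rintro rfl
    exact hAloopless _ hxy
  refine ⟨V, inferInstance, deleteArc A x y, y, x, hne, fun w hw => hAloopless w hw.1,
    hAgirth.anti (deleteArc_le A x y), ?colorable, fun f hf => ?sameColor,
    fun ℓ c hc => hAgirth.le_of_isDipath_deleteArc hxy hne hc⟩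
  case colorable => exact not_not.mp (hA.not_prop_of_lt (deleteArc_lt hxy))
  case sameColor =>
    by_contra hfxy
    exact hA.prop ⟨f, hf.of_deleteArc (Ne.symm hfxy)⟩
end

section
/- For all integers r ≥ 2 and k ≥ 3, there exists a finite digraph J with two distinguished distinct vertices u and w such that: (1) J has directed girth at least k (every directed cycle of J has length at least k); (2) J admits an acyclic r-coloring; and (3) every acyclic r-coloring of J assigns different colors to u and w. -/
open Relation

variable {V : Type} {R : V → V → Prop}

namespace IsDicycle

variable {ℓ : ℕ} {c : ZMod ℓ → V}

theorem map {W : Type} {S : W → W → Prop} (hc : IsDicycle R ℓ c) {φ : V → W}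
    (hφ : Function.Injective φ) (hS : ∀ j, S (φ (c j)) (φ (c (j + 1)))) :
    IsDicycle S ℓ (φ ∘ c) :=
  ⟨hc.1, hφ.comp hc.2.1, hS⟩

theorem rotate (hc : IsDicycle R ℓ c) (i : ZMod ℓ) : IsDicycle R ℓ fun j ↦ c (j + i) :=
  ⟨hc.1, hc.2.1.comp (add_left_injective i), fun j ↦ by
    simpa only [add_right_comm j 1 i] using hc.2.2 (j + i)⟩

end IsDicycle

theorem isDicycle_succ_iff {n : ℕ} {p : Fin (n + 1) → V} :
    IsDicycle R (n + 1) p ↔ n ≠ 0 ∧ Function.Injective p ∧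
      (∀ i : Fin n, R (p i.castSucc) (p i.succ)) ∧ R (p (Fin.last n)) (p 0) := by
  have hstep : (∀ j : Fin (n + 1), R (p j) (p (j + 1))) ↔
      (∀ i : Fin n, R (p i.castSucc) (p i.succ)) ∧ R (p (Fin.last n)) (p 0) := by
    simp only [Fin.forall_fin_succ', Fin.coeSucc_eq_succ, Fin.last_add_one]
  have hlen : 2 ≤ n + 1 ↔ n ≠ 0 := by omega
  exact and_congr hlen (and_congr Iff.rfl hstep)

/-- The digraph `R` has an acyclic coloring with `r` colors, i.e. its dichromatic number is at most
`r`. -/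
def AcyclicColorable (R : V → V → Prop) (r : ℕ) : Prop :=
  ∃ f : V → Fin r, IsAcyclicDigraphColoring R f

/-- The directed girth of `R` is at least `k`, loops counting as cycles of length `1`. The closed
walks considered here may pause at vertices: pauses only make a walk longer, and allowing them makes
the condition easy to transfer along maps that contract arcs. -/
def DigraphGirthGE {V : Type*} (R : V → V → Prop) (k : ℕ) : Prop :=
  ∀ (ℓ : ℕ) [NeZero ℓ] (c : ZMod ℓ → V),
    (∀ j, ReflGen R (c j) (c (j + 1))) → (∃ j, R (c j) (c (j + 1))) → k ≤ ℓ

namespace DigraphGirthGE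

variable {α β : Type*} {A : α → α → Prop} {B : β → β → Prop} {k : ℕ}

theorem mono {A' : α → α → Prop} (hA : DigraphGirthGE A k) (hle : A' ≤ A) :
    DigraphGirthGE A' k :=
  fun ℓ _ c hwalk ⟨j, hj⟩ ↦ hA ℓ c (fun i ↦ (hwalk i).mono hle) ⟨j, hle _ _ hj⟩

theorem not_loop (hA : DigraphGirthGE A k) (hk : 2 ≤ k) (a : α) : ¬ A a a := fun ha ↦
  absurd (hA 1 (fun _ ↦ a) (fun _ ↦ .refl) ⟨0, ha⟩) (by omega)

theorem prodLex (hA : DigraphGirthGE A k) (hB : DigraphGirthGE B k) :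
    DigraphGirthGE (Prod.Lex A B) k := by
  intro ℓ _ c hwalk ⟨i, hi⟩
  by_cases hfst : ∃ j, A (c j).1 (c (j + 1)).1
  · refine hA ℓ (fun j ↦ (c j).1) (fun j ↦ ?_) hfst
    rcases reflGen_iff _ _ _ |>.mp (hwalk j) with heq | hlex
    · rw [heq]
    · rcases Prod.lex_def.mp hlex with hA' | ⟨heq, -⟩
      · exact .single hA'
      · rw [heq]
  · have hsnd {j} (hlex : Prod.Lex A B (c j) (c (j + 1))) : B (c j).2 (c (j + 1)).2 :=
      ((Prod.lex_def.mp hlex).resolve_left fun h ↦ hfst ⟨j, h⟩).2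
    refine hB ℓ (fun j ↦ (c j).2) (fun j ↦ ?_) ⟨i, hsnd hi⟩
    rcases reflGen_iff _ _ _ |>.mp (hwalk j) with heq | hlex
    · rw [heq]
    · exact .single (hsnd hlex)

end DigraphGirthGE

/-- The directed cycle of length `k`, as a relation on `ZMod k`. -/
def CycleArc (k : ℕ) (i j : ZMod k) : Prop := j = i + 1

theorem CycleArc.isDicycle {k : ℕ} (hk : 2 ≤ k) : IsDicycle (CycleArc k) k id :=
  ⟨hk, Function.injective_id, fun _ ↦ rfl⟩

-- The increments of a closed walk sum to `0` in `ZMod k`, so `k` divides the number of its arcs.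
theorem CycleArc.digraphGirthGE (k : ℕ) : DigraphGirthGE (CycleArc k) k := by
  classical
  intro ℓ _ c hwalk ⟨i, hi⟩
  let arcs : Finset (ZMod ℓ) := {j | c (j + 1) = c j + 1}
  have hincr (j : ZMod ℓ) : c (j + 1) - c j = if c (j + 1) = c j + 1 then 1 else 0 := by
    split_ifs with h
    · rw [h, add_sub_cancel_left]
    · rw [((reflGen_iff _ _ _).mp (hwalk j)).resolve_right h, sub_self]
  have hsum : ((arcs.card : ℕ) : ZMod k) = 0 := calc
    ((arcs.card : ℕ) : ZMod k) = ∑ j, (c (j + 1) - c j) := by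
      simp only [hincr, Finset.sum_boole, arcs]
    _ = 0 := by
      rw [Finset.sum_sub_distrib, sub_eq_zero]
      exact Fintype.sum_equiv (Equiv.addRight 1) _ _ fun _ ↦ rfl
  have hpos : 0 < arcs.card := Finset.card_pos.mpr ⟨i, Finset.mem_filter_univ i |>.mpr hi⟩
  calc
    k ≤ arcs.card := Nat.le_of_dvd hpos ((ZMod.natCast_eq_zero_iff _ _).mp hsum)
    _ ≤ ℓ := by simpa only [ZMod.card] using arcs.card_le_univ

theorem IsAcyclicDigraphColoring.comap {W : Type} {S : W → W → Prop} {r s : ℕ} {g : W → Fin s}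
    (hg : IsAcyclicDigraphColoring S g) {φ : V → W} (hφ : Function.Injective φ)
    (hS : ∀ a b, R a b → S (φ a) (φ b)) {f : V → Fin r}
    (hfg : ∀ a b, f a = f b → g (φ a) = g (φ b)) : IsAcyclicDigraphColoring R f := by
  intro ℓ c hc
  obtain ⟨i, j, hij⟩ := hg ℓ _ (hc.map hφ fun j ↦ hS _ _ (hc.2.2 j))
  exact ⟨i, j, mt (hfg _ _) hij⟩

/-- If every copy of `B` uses the last color, one vertex of that color from each copy along the
cycle of `A` gives a monochromatic cycle; otherwise some copy of `B` uses only `r` colors. -/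
theorem not_acyclicColorable_prodLex {α β : Type} {A : α → α → Prop} {B : β → β → Prop} {r ℓ : ℕ}
    {c : ZMod ℓ → α} (hc : IsDicycle A ℓ c) (hB : ¬ AcyclicColorable B r) :
    ¬ AcyclicColorable (Prod.Lex A B) (r + 1) := by
  rintro ⟨f, hf⟩
  by_cases hlast : ∀ a, ∃ b, f (a, b) = Fin.last r
  · choose b hb using hlast
    have hcycle : IsDicycle (Prod.Lex A B) ℓ ((fun a ↦ (a, b a)) ∘ c) :=
      hc.map (fun _ _ h ↦ congrArg Prod.fst h) fun j ↦ .left _ _ (hc.2.2 j)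
    obtain ⟨i, j, hij⟩ := hf ℓ _ hcycle
    exact hij ((hb _).trans (hb _).symm)
  · push Not at hlast
    obtain ⟨a, ha⟩ := hlast
    exact hB ⟨fun b ↦ (f (a, b)).castPred (ha b), hf.comap (Prod.mk_right_injective a)
      (fun _ _ h ↦ .right a h) fun _ _ ↦ Fin.castPred_inj.mp⟩

theorem exists_digraphGirthGE_not_acyclicColorable {k : ℕ} (hk : 2 ≤ k) (r : ℕ) :
    ∃ (V : Type) (_ : Finite V) (R : V → V → Prop),
      DigraphGirthGE R k ∧ ¬ AcyclicColorable R r := by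
  induction r with
  | zero =>
    exact ⟨Unit, inferInstance, fun _ _ ↦ False, fun _ _ _ _ ⟨_, h⟩ ↦ h.elim,
      fun ⟨f, _⟩ ↦ (f ()).elim0⟩
  | succ r ih =>
    obtain ⟨V, _, R, hgirth, hR⟩ := ih
    have : NeZero k := ⟨by omega⟩
    exact ⟨ZMod k × V, inferInstance, Prod.Lex (CycleArc k) R,
      (CycleArc.digraphGirthGE k).prodLex hgirth,
      not_acyclicColorable_prodLex (CycleArc.isDicycle hk) hR⟩

/-- The digraph obtained from `R` by deleting the arc from `x` to `y`. -/
def DeleteArc (R : V → V → Prop) (x y a b : V) : Prop := R a b ∧ ¬ (a = x ∧ b = y)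

theorem deleteArc_lt_s15 {x y : V} (hxy : R x y) : DeleteArc R x y < R :=
  lt_of_le_not_ge (fun _ _ h ↦ h.1) fun hle ↦ (hle x y hxy).2 ⟨rfl, rfl⟩

theorem exists_arc_of_not_acyclicColorable {r : ℕ} [NeZero r] (hR : ¬ AcyclicColorable R r) :
    ∃ x y, R x y := by
  by_contra! hempty
  exact hR ⟨0, fun _ c hc ↦ (hempty _ _ (hc.2.2 0)).elim⟩

theorem exists_le_arc_critical [Finite V] {r : ℕ} [NeZero r] (hR : ¬ AcyclicColorable R r) :
    ∃ S ≤ R, ¬ AcyclicColorable S r ∧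
      ∃ x y, S x y ∧ AcyclicColorable (DeleteArc S x y) r := by
  obtain ⟨S, hSR, hS⟩ :=
    exists_minimal_le_of_wellFoundedLT (fun S : V → V → Prop ↦ ¬ AcyclicColorable S r) R hR
  obtain ⟨x, y, hxy⟩ := exists_arc_of_not_acyclicColorable hS.prop
  exact ⟨S, hSR, hS.prop, x, y, hxy, not_not.mp (hS.not_prop_of_lt (deleteArc_lt_s15 hxy))⟩

/-- The digraph obtained from `R` by subdividing the arc from `x` to `y`; the new vertex is
`none`. -/
inductive SubdivideArc (R : V → V → Prop) (x y : V) : Option V → Option V → Prop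
  | old {a b : V} : DeleteArc R x y a b → SubdivideArc R x y (some a) (some b)
  | enter : SubdivideArc R x y (some x) none
  | leave : SubdivideArc R x y none (some y)

namespace SubdivideArc

variable {x y : V} {r : ℕ}

theorem not_loop (hR : ∀ v, ¬ R v v) (v : Option V) : ¬ SubdivideArc R x y v v := by
  rintro (⟨h⟩)
  exact hR _ h.1

-- Contracting the arc from `none` to `y` turns the cycle into a closed walk of `R` with pauses.
theorem le_length_of_digraphGirthGE (hxy : R x y) {k : ℕ} (hgirth : DigraphGirthGE R k) {ℓ : ℕ}
    {c : ZMod ℓ → Option V} (hc : IsDicycle (SubdivideArc R x y) ℓ c) : k ≤ ℓ := by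
  have : NeZero ℓ := ⟨by have := hc.1; omega⟩
  have harc {p q : Option V} (h : SubdivideArc R x y p q) (hp : p ≠ none) :
      R (p.getD y) (q.getD y) := by
    cases h with
    | old h => exact h.1
    | enter => exact hxy
    | leave => exact absurd rfl hp
  have hstep {p q : Option V} (h : SubdivideArc R x y p q) :
      ReflGen R (p.getD y) (q.getD y) := by
    by_cases hp : p = none
    · subst hp
      cases h
      exact .refl
    · exact .single (harc h hp)
  have hold : ∃ j, c j ≠ none := by
    by_contra! hnone
    have h := hc.2.2 0
    rw [hnone, hnone] at h
    cases h
  obtain ⟨j, hj⟩ := hold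
  exact hgirth ℓ (fun j ↦ (c j).getD y) (fun j ↦ hstep (hc.2.2 j)) ⟨j, harc (hc.2.2 j) hj⟩

theorem isAcyclicDigraphColoring_elim {f : V → Fin r}
    (hf : IsAcyclicDigraphColoring (DeleteArc R x y) f) {z : Fin r} (hz : z ≠ f x) :
    IsAcyclicDigraphColoring (SubdivideArc R x y) fun p ↦ p.elim z f := by
  intro ℓ c hc
  by_cases hnone : ∃ j, c j = none
  · obtain ⟨j, hj⟩ := hnone
    have henter := hc.2.2 (j - 1)
    rw [sub_add_cancel, hj] at henter
    have hprev : c (j - 1) = some x := by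
      generalize c (j - 1) = p at henter
      cases henter
      rfl
    exact ⟨j, j - 1, by simpa only [hj, hprev, Option.elim] using hz⟩
  · push Not at hnone
    choose d hd using fun j ↦ Option.ne_none_iff_exists'.mp (hnone j)
    obtain rfl : c = some ∘ d := funext hd
    refine hf ℓ d ⟨hc.1, hc.2.1.of_comp, fun j ↦ ?_⟩
    cases hc.2.2 j with
    | old h => exact h

theorem isDicycle_cons_none {n : ℕ} {c : Fin (n + 1) → V} (hc : IsDicycle R (n + 1) c)
    (hlast : c (Fin.last n) = x) (hzero : c 0 = y) :
    IsDicycle (SubdivideArc R x y) (n + 2) (Fin.cons none (some ∘ c) : Fin (n + 2) → Option V) := by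
  obtain ⟨-, hinj, hstep, -⟩ := isDicycle_succ_iff.mp hc
  refine isDicycle_succ_iff.mpr ⟨n.succ_ne_zero, ?_, fun i ↦ ?_, hlast ▸ .enter⟩
  · exact Fin.cons_injective_iff.mpr ⟨by simp, (Option.some_injective V).comp hinj⟩
  · cases i using Fin.cases with
    | zero => exact hzero ▸ .leave
    | succ i =>
      exact .old ⟨hstep i, fun h ↦ i.castSucc_ne_last (hinj (h.1.trans hlast.symm))⟩

theorem exists_isDicycle_getD_mem_range {ℓ : ℕ} {c : ZMod ℓ → V} (hc : IsDicycle R ℓ c) :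
    ∃ (m : ℕ) (d : ZMod m → Option V), IsDicycle (SubdivideArc R x y) m d ∧
      ∀ j, (d j).getD x ∈ Set.range c := by
  by_cases hxy : ∃ i, c i = x ∧ c (i + 1) = y
  · obtain ⟨i, rfl, rfl⟩ := hxy
    obtain ⟨n, rfl⟩ : ∃ n, ℓ = n + 1 := ⟨ℓ - 1, by have := hc.1; omega⟩
    have hlast (l : ZMod (n + 1)) (hl : l + 1 = 0) : l + (i + 1) = i := by
      rw [add_left_comm, hl, add_zero]
    refine ⟨n + 2, _, isDicycle_cons_none (hc.rotate (i + 1))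
      (congrArg c (hlast _ (Fin.last_add_one n)))
      (congrArg c (zero_add _)), fun j : Fin (n + 2) ↦ ?_⟩
    cases j using Fin.cases with
    | zero => exact ⟨i, rfl⟩
    | succ j => exact ⟨_, rfl⟩
  · exact ⟨ℓ, _, hc.map (Option.some_injective V) fun j ↦
      .old ⟨hc.2.2 j, fun h ↦ hxy ⟨j, h⟩⟩, fun j ↦ ⟨j, rfl⟩⟩

theorem isAcyclicDigraphColoring_comp_some {g : Option V → Fin r}
    (hg : IsAcyclicDigraphColoring (SubdivideArc R x y) g) (hx : g (some x) = g none) :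
    IsAcyclicDigraphColoring R (g ∘ some) := by
  intro ℓ c hc
  obtain ⟨m, d, hd, hrange⟩ := exists_isDicycle_getD_mem_range (x := x) (y := y) hc
  have hgetD (p : Option V) : g (some (p.getD x)) = g p := by
    cases p with
    | none => exact hx
    | some _ => rfl
  obtain ⟨i, j, hij⟩ := hg m d hd
  obtain ⟨i', hi'⟩ := hrange i
  obtain ⟨j', hj'⟩ := hrange j
  refine ⟨i', j', ?_⟩
  simpa only [Function.comp_apply, hi', hj', hgetD] using hij

end SubdivideArc

/-- For all `r ≥ 2`, `k ≥ 3` there is a finite digraph `J` with directed girth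
at least `k`, admitting an acyclic `r`-coloring, with two distinct vertices
`u`, `w` that get different colors in every acyclic `r`-coloring. -/
theorem exists_diff_color_digraph_gadget (r k : ℕ) (hr : 2 ≤ r) (hk : 3 ≤ k) :
    ∃ (V : Type) (_ : Fintype V) (Adj : V → V → Prop) (u w : V),
      u ≠ w ∧
      (∀ v : V, ¬ Adj v v) ∧
      (∀ (ℓ : ℕ) (c : ZMod ℓ → V), IsDicycle Adj ℓ c → k ≤ ℓ) ∧
      (∃ f : V → Fin r, IsAcyclicDigraphColoring Adj f) ∧
      (∀ f : V → Fin r, IsAcyclicDigraphColoring Adj f → f u ≠ f w) := by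
  have : NeZero r := ⟨by omega⟩
  have : Nontrivial (Fin r) := Fin.nontrivial_iff_two_le.mpr hr
  have hk₂ : 2 ≤ k := by omega
  obtain ⟨V, _, R₀, hgirth₀, hR₀⟩ := exists_digraphGirthGE_not_acyclicColorable hk₂ r
  obtain ⟨R, hle, hR, x, y, hxy, f, hf⟩ := exists_le_arc_critical hR₀
  have hgirth : DigraphGirthGE R k := hgirth₀.mono hle
  obtain ⟨z, hz⟩ := exists_ne (f x)
  exact ⟨Option V, Fintype.ofFinite _, SubdivideArc R x y, some x, none, Option.some_ne_none x,
    SubdivideArc.not_loop (hgirth.not_loop hk₂),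
    fun _ _ hc ↦ SubdivideArc.le_length_of_digraphGirthGE hxy hgirth hc,
    ⟨_, SubdivideArc.isAcyclicDigraphColoring_elim hf hz⟩,
    fun _ hg hx ↦ hR ⟨_, SubdivideArc.isAcyclicDigraphColoring_comp_some hg hx⟩⟩
end

section
/- For every integer k ≥ 3, there exists a finite digraph H with three distinguished pairwise distinct vertices a, b, c such that: (1) every vertex of H has in-degree at most k+1 and out-degree at most k+1; (2) the directed girth of H is exactly k, i.e., H contains a directed cycle of length k and no shorter directed cycle; (3) H admits an acyclic 2-coloring; and (4) every acyclic 2-coloring of H assigns the same color to a, b, and c. -/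
/-!
Take `k` layers of `k` vertices each, with all arcs from every layer to the cyclically next one, and
put a directed `k`-cycle inside every layer except layers `0` and `1`. A directed cycle either winds
around through all layers or is the `k`-cycle of one layer, so the girth is `k`. In an acyclic
`2`-coloring each color must be missing from some layer, since otherwise one vertex of that color
per layer gives a monochromatic cycle. Layers carrying a cycle see both colors, so the two colors
are missing from layers `0` and `1`, one each, and layer `0` is monochromatic.
-/

theorem forall_zmod_of_add_one {n : ℕ} [NeZero n] {P : ZMod n → Prop} {a : ZMod n} (ha : P a)
    (hP : ∀ i, P i → P (i + 1)) (i : ZMod n) : P i := by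
  have shift (t : ℕ) : P (a + t) := by
    induction t with
    | zero => simpa using ha
    | succ t ih => simpa only [Nat.cast_succ, add_assoc] using hP _ ih
  simpa only [ZMod.natCast_zmod_val, add_sub_cancel] using shift (i - a).val

theorem surjective_zmod_of_add_one_mem_range {n : ℕ} [NeZero n] {α : Type*} [Nonempty α]
    {g : α → ZMod n} (hg : ∀ a, g a + 1 ∈ Set.range g) : Function.Surjective g := by
  obtain ⟨a⟩ := ‹Nonempty α›
  refine forall_zmod_of_add_one (Set.mem_range_self a) ?_
  rintro _ ⟨b, rfl⟩
  exact hg b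

theorem le_of_surjective_zmod {m n : ℕ} [NeZero m] {g : ZMod m → ZMod n}
    (hg : Function.Surjective g) : n ≤ m := by
  simpa only [Nat.card_zmod] using Nat.card_le_card_of_surjective g hg

theorem fin_two_eq_of_ne_of_ne {a b c : Fin 2} (ha : a ≠ c) (hb : b ≠ c) : a = b := by
  omega

theorem card_fst_eq_or_le {ι α : Type*} [Finite α] (i j : ι) (P : α → Prop) :
    Nat.card {u : ι × α // u.1 = i ∨ u.1 = j ∧ P u.2} ≤ Nat.card α + Nat.card {x // P x} := by
  have cover : {u : ι × α | u.1 = i ∨ u.1 = j ∧ P u.2} ⊆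
      Prod.mk i '' Set.univ ∪ Prod.mk j '' {x | P x} := by
    rintro ⟨_, x⟩ (rfl | ⟨rfl, hx⟩)
    · exact Or.inl ⟨x, trivial, rfl⟩
    · exact Or.inr ⟨x, hx, rfl⟩
  calc Set.ncard {u : ι × α | u.1 = i ∨ u.1 = j ∧ P u.2}
      ≤ (Prod.mk i '' Set.univ ∪ Prod.mk j '' {x | P x}).ncard := Set.ncard_le_ncard cover
    _ ≤ (Prod.mk i '' Set.univ).ncard + (Prod.mk j '' {x | P x}).ncard := Set.ncard_union_le _ _
    _ ≤ (Set.univ : Set α).ncard + {x | P x}.ncard :=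
      add_le_add Set.ncard_image_le Set.ncard_image_le
    _ = Nat.card α + Nat.card {x // P x} := by rw [Set.ncard_univ, ← Nat.card_coe_set_eq]; rfl

theorem IsDicycle.neZero {V : Type} {Adj : V → V → Prop} {ℓ : ℕ} {w : ZMod ℓ → V}
    (hw : IsDicycle Adj ℓ w) : NeZero ℓ :=
  ⟨(zero_lt_two.trans_le hw.1).ne'⟩

/-- The cyclic blow-up of the digraphs `A i`, `i : ZMod m`, on a common vertex type: layer `i`
is a copy of `A i`, and all arcs from each layer to the next one are added. -/
def CyclicBlowup {m : ℕ} {V : Type} (A : ZMod m → V → V → Prop) (u v : ZMod m × V) : Prop :=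
  v.1 = u.1 + 1 ∨ v.1 = u.1 ∧ A u.1 u.2 v.2

namespace CyclicBlowup

variable {m ℓ : ℕ} {V : Type} {A : ZMod m → V → V → Prop}

theorem irrefl (hm : m ≠ 1) (hA : ∀ i x, ¬ A i x x) (v : ZMod m × V) : ¬ CyclicBlowup A v v := by
  have := ZMod.nontrivial_iff.2 hm
  rintro (h | h)
  · exact one_ne_zero (left_eq_add.1 h)
  · exact hA _ _ h.2

theorem card_inNeighbors_le [Finite V] (v : ZMod m × V) :
    Nat.card {u // CyclicBlowup A u v} ≤ Nat.card V + Nat.card {x // A v.1 x v.2} := by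
  have layers (u : ZMod m × V) :
      CyclicBlowup A u v ↔ u.1 = v.1 - 1 ∨ u.1 = v.1 ∧ A v.1 u.2 v.2 := by
    refine or_congr (eq_comm.trans eq_sub_iff_add_eq.symm) ?_
    rw [eq_comm (a := v.1)]
    exact and_congr_right fun h => by rw [h]
  simpa only [layers] using card_fst_eq_or_le (v.1 - 1) v.1 fun x => A v.1 x v.2

theorem card_outNeighbors_le [Finite V] (v : ZMod m × V) :
    Nat.card {u // CyclicBlowup A v u} ≤ Nat.card V + Nat.card {x // A v.1 v.2 x} :=
  card_fst_eq_or_le (v.1 + 1) v.1 (A v.1 v.2)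

theorem isDicycle_transversal (hm : 2 ≤ m) (y : ZMod m → V) :
    IsDicycle (CyclicBlowup A) m fun j => (j, y j) :=
  ⟨hm, fun _ _ h => congrArg Prod.fst h, fun _ => Or.inl rfl⟩

theorem isDicycle_layer {i : ZMod m} {u : ZMod ℓ → V} (hu : IsDicycle (A i) ℓ u) :
    IsDicycle (CyclicBlowup A) ℓ fun j => (i, u j) :=
  ⟨hu.1, fun _ _ h => hu.2.1 (congrArg Prod.snd h), fun j => Or.inr ⟨rfl, hu.2.2 j⟩⟩

theorem surjective_fst_or_exists_layer [NeZero m] {w : ZMod ℓ → ZMod m × V}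
    (hw : IsDicycle (CyclicBlowup A) ℓ w) :
    Function.Surjective (fun j => (w j).1) ∨
      ∃ (i : ZMod m) (u : ZMod ℓ → V), w = (fun j => (i, u j)) ∧ IsDicycle (A i) ℓ u := by
  have := hw.neZero
  obtain ⟨hℓ, hinj, hadj⟩ := hw
  by_cases hnext : ∀ j, (w j).1 + 1 ∈ Set.range fun j => (w j).1
  · exact Or.inl (surjective_zmod_of_add_one_mem_range hnext)
  right
  push Not at hnext
  -- The cycle never visits the layer after that of `w a`, so it never leaves the layer of `w a`.
  obtain ⟨a, ha⟩ := hnext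
  have stay (j) (hj : (w j).1 = (w a).1) :
      (w (j + 1)).1 = (w j).1 ∧ A (w j).1 (w j).2 (w (j + 1)).2 :=
    (hadj j).resolve_left fun h => ha ⟨j + 1, h.trans (by rw [hj])⟩
  have hlayer : ∀ j, (w j).1 = (w a).1 :=
    forall_zmod_of_add_one rfl fun j hj => (stay j hj).1.trans hj
  have w_eq : w = fun j => ((w a).1, (w j).2) := funext fun j => Prod.ext (hlayer j) rfl
  refine ⟨(w a).1, fun j => (w j).2, w_eq, hℓ, fun i j h => hinj ?_, fun j => ?_⟩
  · exact Prod.ext ((hlayer i).trans (hlayer j).symm) h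
  · simpa only [hlayer j] using (stay j (hlayer j)).2

theorem isAcyclicDigraphColoring_iff {r : ℕ} (hm : 2 ≤ m) {f : ZMod m × V → Fin r} :
    IsAcyclicDigraphColoring (CyclicBlowup A) f ↔
      (∀ i, IsAcyclicDigraphColoring (A i) fun x => f (i, x)) ∧ ∀ c, ∃ i, ∀ x, f (i, x) ≠ c := by
  constructor
  · refine fun hf => ⟨fun i ℓ u hu => hf ℓ _ (isDicycle_layer hu), fun c => ?_⟩
    by_contra! hc
    choose y hy using hc
    obtain ⟨i, j, hij⟩ := hf m _ (isDicycle_transversal hm y)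
    exact hij ((hy i).trans (hy j).symm)
  · rintro ⟨hlayer, hmiss⟩ ℓ w hw
    have : NeZero m := ⟨by omega⟩
    obtain hsurj | ⟨i, u, rfl, hu⟩ := surjective_fst_or_exists_layer hw
    · obtain ⟨i, hi⟩ := hmiss (f (w 0))
      obtain ⟨j, rfl⟩ := hsurj i
      exact ⟨j, 0, hi (w j).2⟩
    · exact hlayer i ℓ u hu

theorem exists_isAcyclicDigraphColoring_two (hm : 2 ≤ m) {p q : ZMod m} (hpq : p ≠ q)
    (hp : ∀ ℓ w, ¬ IsDicycle (A p) ℓ w) (hq : ∀ ℓ w, ¬ IsDicycle (A q) ℓ w)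
    (hA : ∀ i, i ≠ p → i ≠ q → ∃ g : V → Fin 2, IsAcyclicDigraphColoring (A i) g) :
    ∃ f : ZMod m × V → Fin 2, IsAcyclicDigraphColoring (CyclicBlowup A) f := by
  choose g hg using hA
  let f (v : ZMod m × V) : Fin 2 :=
    if hvp : v.1 = p then 0 else if hvq : v.1 = q then 1 else g v.1 hvp hvq v.2
  have f_p (x : V) : f (p, x) = 0 := dif_pos rfl
  have f_q (x : V) : f (q, x) = 1 := by simp [f, hpq.symm]
  refine ⟨f, (isAcyclicDigraphColoring_iff hm).2 ⟨fun i => ?_, fun c => ?_⟩⟩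
  · by_cases hip : i = p
    · exact fun ℓ w hw => absurd (hip ▸ hw) (hp ℓ w)
    by_cases hiq : i = q
    · exact fun ℓ w hw => absurd (hiq ▸ hw) (hq ℓ w)
    simpa only [f, dif_neg hip, dif_neg hiq] using hg i hip hiq
  · obtain rfl | rfl : c = 0 ∨ c = 1 := by omega
    · exact ⟨q, fun x => by simp [f_q]⟩
    · exact ⟨p, fun x => by simp [f_p]⟩

theorem coloring_eq_of_isDicycle_layers (hm : 2 ≤ m) {p q : ZMod m}
    (hA : ∀ i, i ≠ p → i ≠ q → ∃ ℓ w, IsDicycle (A i) ℓ w) {f : ZMod m × V → Fin 2}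
    (hf : IsAcyclicDigraphColoring (CyclicBlowup A) f) (x y : V) : f (p, x) = f (p, y) := by
  obtain ⟨hlayer, hmiss⟩ := (isAcyclicDigraphColoring_iff hm).1 hf
  have miss_p_or_q (c) : (∀ z, f (p, z) ≠ c) ∨ ∀ z, f (q, z) ≠ c := by
    obtain ⟨i, hi⟩ := hmiss c
    by_cases hip : i = p
    · exact Or.inl (hip ▸ hi)
    by_cases hiq : i = q
    · exact Or.inr (hiq ▸ hi)
    obtain ⟨ℓ, w, hw⟩ := hA i hip hiq
    obtain ⟨s, t, hst⟩ := hlayer i ℓ w hw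
    exact absurd (fin_two_eq_of_ne_of_ne (hi (w s)) (hi (w t))) hst
  have miss_p : ∃ c, ∀ z, f (p, z) ≠ c := by
    by_contra! hp
    have hq (c) : f (q, x) ≠ c := (miss_p_or_q c).resolve_left (by simpa using hp c) x
    exact hq _ rfl
  obtain ⟨c, hc⟩ := miss_p
  exact fin_two_eq_of_ne_of_ne (hc x) (hc y)

end CyclicBlowup

/-- The layers of the equalizer digraph: layers `0` and `1` have no arcs, and every other layer is
the directed cycle on `ZMod n`. -/
def EqualizerLayer (m n : ℕ) (i : ZMod m) (x y : ZMod n) : Prop :=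
  i ≠ 0 ∧ i ≠ 1 ∧ y = x + 1

namespace EqualizerLayer

variable {m n ℓ : ℕ} {i : ZMod m}

theorem irrefl (hn : n ≠ 1) (x : ZMod n) : ¬ EqualizerLayer m n i x x := by
  have := ZMod.nontrivial_iff.2 hn
  exact fun h => one_ne_zero (left_eq_add.1 h.2.2)

theorem card_inNeighbors_le_one (y : ZMod n) : Nat.card {x // EqualizerLayer m n i x y} ≤ 1 :=
  calc Set.ncard {x | EqualizerLayer m n i x y}
      ≤ Set.ncard {y - 1} := Set.ncard_le_ncard fun _ h => eq_sub_of_add_eq h.2.2.symm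
    _ = 1 := Set.ncard_singleton _

theorem card_outNeighbors_le_one (x : ZMod n) : Nat.card {y // EqualizerLayer m n i x y} ≤ 1 :=
  calc Set.ncard {y | EqualizerLayer m n i x y}
      ≤ Set.ncard {x + 1} := Set.ncard_le_ncard fun _ h => h.2.2
    _ = 1 := Set.ncard_singleton _

theorem not_isDicycle_zero (ℓ : ℕ) (w : ZMod ℓ → ZMod n) :
    ¬ IsDicycle (EqualizerLayer m n 0) ℓ w :=
  fun hw => (hw.2.2 0).1 rfl

theorem not_isDicycle_one (ℓ : ℕ) (w : ZMod ℓ → ZMod n) :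
    ¬ IsDicycle (EqualizerLayer m n 1) ℓ w :=
  fun hw => (hw.2.2 0).2.1 rfl

theorem isDicycle_id (hn : 2 ≤ n) (hi₀ : i ≠ 0) (hi₁ : i ≠ 1) :
    IsDicycle (EqualizerLayer m n i) n id :=
  ⟨hn, Function.injective_id, fun _ => ⟨hi₀, hi₁, rfl⟩⟩

theorem surjective_of_isDicycle [NeZero n] {w : ZMod ℓ → ZMod n}
    (hw : IsDicycle (EqualizerLayer m n i) ℓ w) : Function.Surjective w :=
  surjective_zmod_of_add_one_mem_range fun j => ⟨j + 1, (hw.2.2 j).2.2⟩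

theorem min_le_of_isDicycle_cyclicBlowup [NeZero m] [NeZero n] {w : ZMod ℓ → ZMod m × ZMod n}
    (hw : IsDicycle (CyclicBlowup (EqualizerLayer m n)) ℓ w) : min m n ≤ ℓ := by
  have := hw.neZero
  obtain hsurj | ⟨_, u, -, hu⟩ := CyclicBlowup.surjective_fst_or_exists_layer hw
  · exact min_le_of_left_le (le_of_surjective_zmod hsurj)
  · exact min_le_of_right_le (le_of_surjective_zmod (surjective_of_isDicycle hu))

theorem exists_isAcyclicDigraphColoring_two (hn : 2 ≤ n) :
    ∃ g : ZMod n → Fin 2, IsAcyclicDigraphColoring (EqualizerLayer m n i) g := by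
  have : Fact (1 < n) := ⟨hn⟩
  refine ⟨fun x => if x = 0 then 0 else 1, fun ℓ w hw => ?_⟩
  have : NeZero n := ⟨by omega⟩
  obtain ⟨s, hs⟩ := surjective_of_isDicycle hw 0
  obtain ⟨t, ht⟩ := surjective_of_isDicycle hw 1
  exact ⟨s, t, by simp [hs, ht]⟩

end EqualizerLayer

/-- For every `k ≥ 3` there is a finite digraph `H` with three pairwise
distinct distinguished vertices `a`, `b`, `c`, with all in-degrees and
out-degrees at most `k + 1`, with directed girth exactly `k`, admitting an
acyclic `2`-coloring, and such that every acyclic `2`-coloring assigns the same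
color to `a`, `b` and `c`. -/
theorem exists_equalizer_digraph (k : ℕ) (hk : 3 ≤ k) :
    ∃ (V : Type) (_ : Fintype V) (Adj : V → V → Prop) (a b c : V),
      a ≠ b ∧ a ≠ c ∧ b ≠ c ∧
      (∀ v : V, ¬ Adj v v) ∧
      (∀ v : V, Nat.card {u : V // Adj u v} ≤ k + 1) ∧
      (∀ v : V, Nat.card {u : V // Adj v u} ≤ k + 1) ∧
      (∃ w : ZMod k → V, IsDicycle Adj k w) ∧
      (∀ (ℓ : ℕ) (w : ZMod ℓ → V), IsDicycle Adj ℓ w → k ≤ ℓ) ∧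
      (∃ f : V → Fin 2, IsAcyclicDigraphColoring Adj f) ∧
      (∀ f : V → Fin 2, IsAcyclicDigraphColoring Adj f → f a = f b ∧ f b = f c) := by
  have : Fact (1 < k) := ⟨by omega⟩
  have : NeZero k := ⟨by omega⟩
  obtain ⟨a, b, c, hab, hac, hbc⟩ :=
    Fintype.two_lt_card_iff.1 (show 2 < Fintype.card (ZMod k) by rwa [ZMod.card])
  refine ⟨ZMod k × ZMod k, inferInstance, CyclicBlowup (EqualizerLayer k k),
    (0, a), (0, b), (0, c), by simpa, by simpa, by simpa, ?_, fun v => ?_, fun v => ?_,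
    ⟨_, CyclicBlowup.isDicycle_transversal (by omega) 0⟩, fun ℓ w hw => ?_, ?_, fun f hf => ?_⟩
  · exact CyclicBlowup.irrefl (by omega) fun _ => EqualizerLayer.irrefl (by omega)
  · calc _ ≤ Nat.card (ZMod k) + _ := CyclicBlowup.card_inNeighbors_le v
      _ ≤ k + 1 := add_le_add (Nat.card_zmod k).le (EqualizerLayer.card_inNeighbors_le_one v.2)
  · calc _ ≤ Nat.card (ZMod k) + _ := CyclicBlowup.card_outNeighbors_le v
      _ ≤ k + 1 := add_le_add (Nat.card_zmod k).le (EqualizerLayer.card_outNeighbors_le_one v.2)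
  · simpa only [min_self] using EqualizerLayer.min_le_of_isDicycle_cyclicBlowup hw
  · exact CyclicBlowup.exists_isAcyclicDigraphColoring_two (by omega) zero_ne_one
      EqualizerLayer.not_isDicycle_zero EqualizerLayer.not_isDicycle_one
      fun _ _ _ => EqualizerLayer.exists_isAcyclicDigraphColoring_two (by omega)
  · have layer_eq := CyclicBlowup.coloring_eq_of_isDicycle_layers (by omega)
      (fun i hi₀ hi₁ => ⟨k, id, EqualizerLayer.isDicycle_id (by omega) hi₀ hi₁⟩) hf
    exact ⟨layer_eq a b, layer_eq b c⟩
end
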